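/- Assume the local setting. Let G(x) be a μ×μ matrix with entries in K_v(x) such that |G(x)|_{v,Gauss} ≤ 1, define G_n and χ_v as usual, and let n ≥ 1 be an integer such that |G_{n·κ_v}(x)|_{v,Gauss} ≤ |[κ_v]_q|_v (unipotent reduction of order n modulo 1 − q^{κ_v}). Then χ_v ≥ |[κ_v]_q|_v^{(n−1)/(n·κ_v)} · |p|_v^{1/(κ_v(p−1))}. -/

import Mathlib

open Filter
open scoped ENNReal

noncomputable section

variable {Kv : Type*} [NormedField Kv]

/-- `[n]_q = 1 + q + ⋯ + q^{n-1}`. -/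
def qNat (q : Kv) (n : ℕ) : Kv := ∑ i ∈ Finset.range n, q ^ i

/-- `[n]_q! = [1]_q ⋯ [n]_q`. -/
def qFactorial (q : Kv) : ℕ → Kv
  | 0 => 1
  | n + 1 => qFactorial q n * qNat q (n + 1)

/-- The Gaussian binomial coefficient `binom(n,i)_q`. -/
def qBinom (q : Kv) (n i : ℕ) : Kv := qFactorial q n / (qFactorial q i * qFactorial q (n - i))

/-- The substitution `x ↦ qx` on rational functions. -/
def ratSubst (q : Kv) (f : RatFunc Kv) : RatFunc Kv :=
  algebraMap (Polynomial Kv) (RatFunc Kv) (f.num.comp (Polynomial.C q * Polynomial.X)) /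
    algebraMap (Polynomial Kv) (RatFunc Kv) (f.denom.comp (Polynomial.C q * Polynomial.X))

/-- The `q`-difference operator `d_q f(x) = (f(qx) - f(x))/((q-1)x)`. -/
def qDeriv (q : Kv) (f : RatFunc Kv) : RatFunc Kv :=
  (ratSubst q f - f) / (RatFunc.C (q - 1) * RatFunc.X)

/-- The Gauss norm of a polynomial: the sup of the norms of its coefficients. -/
def polyGaussNorm (P : Polynomial Kv) : ℝ := ⨆ i : ℕ, ‖P.coeff i‖

/-- The Gauss norm of a rational function. -/
def gaussNorm (f : RatFunc Kv) : ℝ := polyGaussNorm f.num / polyGaussNorm f.denom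

/-- The Gauss norm of a matrix of rational functions: max of the Gauss norms of the entries. -/
def matGaussNorm {μ : ℕ} (M : Matrix (Fin μ) (Fin μ) (RatFunc Kv)) : ℝ :=
  ⨆ i, ⨆ j, gaussNorm (M i j)

/-- The sequence of matrices `G_n`: `G_0 = 1`, `G_{n+1}(x) = G(x)·G_n(qx) + (d_q G_n)(x)`. -/
def Gseq {μ : ℕ} (q : Kv) (G : Matrix (Fin μ) (Fin μ) (RatFunc Kv)) :
    ℕ → Matrix (Fin μ) (Fin μ) (RatFunc Kv)
  | 0 => 1
  | n + 1 => G * (Gseq q G n).map (ratSubst q) + (Gseq q G n).map (qDeriv q)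

/-- `χ_v = min(1, liminf |G_n/[n]_q!|^{-1/n})`, computed in `ℝ≥0∞`. -/
def chiV {μ : ℕ} (q : Kv) (G : Matrix (Fin μ) (Fin μ) (RatFunc Kv)) : ℝ≥0∞ :=
  min 1 (Filter.liminf (fun n : ℕ =>
    (ENNReal.ofReal (matGaussNorm (Gseq q G n) / ‖qFactorial q n‖)) ^ (-(1 / (n : ℝ))))
    Filter.atTop)

section aux
open Polynomial
variable {K : Type*} [NormedField K]

lemma pgn_le {P : K[X]} {c : ℝ} (h : ∀ i, ‖P.coeff i‖ ≤ c) : polyGaussNorm P ≤ c :=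
  ciSup_le h

lemma pgn_eq (P : K[X]) :
    polyGaussNorm P = P.gaussNorm (NormedField.toAbsoluteValue K) 1 := by
  apply le_antisymm
  · apply pgn_le
    intro i
    have := P.le_gaussNorm (NormedField.toAbsoluteValue K) (c := 1) zero_le_one i
    rw [one_pow, mul_one] at this; exact this
  · obtain ⟨i, hi⟩ := P.exists_eq_gaussNorm (NormedField.toAbsoluteValue K) 1
    rw [hi]
    have hb : BddAbove (Set.range fun i => ‖P.coeff i‖) := by
      refine ⟨P.gaussNorm (NormedField.toAbsoluteValue K) 1, ?_⟩
      rintro _ ⟨j, rfl⟩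
      have := P.le_gaussNorm (NormedField.toAbsoluteValue K) (c := 1) zero_le_one j
      rw [one_pow, mul_one] at this; exact this
    rw [one_pow, mul_one]
    exact le_ciSup hb i

lemma le_pgn (P : K[X]) (i : ℕ) : ‖P.coeff i‖ ≤ polyGaussNorm P := by
  rw [pgn_eq]
  have := P.le_gaussNorm (NormedField.toAbsoluteValue K) (c := 1) zero_le_one i
  rw [one_pow, mul_one] at this; exact this

lemma na_abs (hna : ∀ x y : K, ‖x + y‖ ≤ max ‖x‖ ‖y‖) :
    IsNonarchimedean (NormedField.toAbsoluteValue K) := fun a b => hna a b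

lemma pgn_mul (hna : ∀ x y : K, ‖x + y‖ ≤ max ‖x‖ ‖y‖) (P Q : K[X]) :
    polyGaussNorm (P * Q) = polyGaussNorm P * polyGaussNorm Q := by
  simp only [pgn_eq]
  exact gaussNorm_mul (na_abs hna) one_pos P Q

lemma pgn_add (hna : ∀ x y : K, ‖x + y‖ ≤ max ‖x‖ ‖y‖) (P Q : K[X]) :
    polyGaussNorm (P + Q) ≤ max (polyGaussNorm P) (polyGaussNorm Q) := by
  simp only [pgn_eq]
  exact isNonarchimedean_gaussNorm _ (na_abs hna) zero_le_one P Q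

lemma pgn_nonneg (P : K[X]) : 0 ≤ polyGaussNorm P := (norm_nonneg _).trans (le_pgn P 0)

lemma pgn_pos {P : K[X]} (h : P ≠ 0) : 0 < polyGaussNorm P := by
  apply lt_of_lt_of_le _ (le_pgn P P.natDegree)
  simpa using h

lemma pgn_C (a : K) : polyGaussNorm (C a) = ‖a‖ := by
  rw [pgn_eq, gaussNorm_C]; rfl

lemma pgn_X : polyGaussNorm (X : K[X]) = 1 := by
  rw [pgn_eq, ← monomial_one_one_eq_X, gaussNorm_monomial]; simp

lemma pgn_zero : polyGaussNorm (0 : K[X]) = 0 := by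
  rw [pgn_eq, gaussNorm_zero]

lemma pgn_one : polyGaussNorm (1 : K[X]) = 1 := by
  rw [← C_1, pgn_C, norm_one]

lemma gn_div (hna : ∀ x y : K, ‖x + y‖ ≤ max ‖x‖ ‖y‖) (P Q : K[X]) (hQ : Q ≠ 0) :
    gaussNorm (algebraMap K[X] (RatFunc K) P / algebraMap K[X] (RatFunc K) Q) =
      polyGaussNorm P / polyGaussNorm Q := by
  unfold _root_.gaussNorm
  set f := algebraMap K[X] (RatFunc K) P / algebraMap K[X] (RatFunc K) Q with hf
  have h : f.num * Q = P * f.denom := by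
    exact (RatFunc.num_mul_eq_mul_denom_iff hQ).mpr hf
  have h2 : polyGaussNorm f.num * polyGaussNorm Q = polyGaussNorm P * polyGaussNorm f.denom := by
    rw [← pgn_mul hna, ← pgn_mul hna, h]
  rw [div_eq_div_iff (pgn_pos f.denom_ne_zero).ne' (pgn_pos hQ).ne', h2]

lemma ex_rep (f : RatFunc K) : ∃ P Q : K[X], Q ≠ 0 ∧
    f = algebraMap K[X] (RatFunc K) P / algebraMap K[X] (RatFunc K) Q :=
  ⟨f.num, f.denom, f.denom_ne_zero, (RatFunc.num_div_denom f).symm⟩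

lemma am_ne {Q : K[X]} (hQ : Q ≠ 0) : algebraMap K[X] (RatFunc K) Q ≠ 0 := by
  simpa using hQ

lemma gn_nonneg (f : RatFunc K) : 0 ≤ gaussNorm f := div_nonneg (pgn_nonneg _) (pgn_nonneg _)

lemma gn_mul (hna : ∀ x y : K, ‖x + y‖ ≤ max ‖x‖ ‖y‖) (f g : RatFunc K) :
    gaussNorm (f * g) = gaussNorm f * gaussNorm g := by
  obtain ⟨P, Q, hQ, rfl⟩ := ex_rep f
  obtain ⟨R, S, hS, rfl⟩ := ex_rep g
  rw [div_mul_div_comm, ← map_mul, ← map_mul, gn_div hna _ _ (mul_ne_zero hQ hS),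
    gn_div hna _ _ hQ, gn_div hna _ _ hS, pgn_mul hna, pgn_mul hna, div_mul_div_comm]

lemma gn_add (hna : ∀ x y : K, ‖x + y‖ ≤ max ‖x‖ ‖y‖) (f g : RatFunc K) :
    gaussNorm (f + g) ≤ max (gaussNorm f) (gaussNorm g) := by
  obtain ⟨P, Q, hQ, rfl⟩ := ex_rep f
  obtain ⟨R, S, hS, rfl⟩ := ex_rep g
  rw [div_add_div _ _ (am_ne hQ) (am_ne hS), ← map_mul, ← map_mul, ← map_mul, ← map_add,
    gn_div hna _ _ (mul_ne_zero hQ hS),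
    gn_div hna _ _ hQ, gn_div hna _ _ hS, pgn_mul hna]
  have h1 := pgn_pos hQ
  have h2 := pgn_pos hS
  rw [div_le_iff₀ (by positivity), max_mul_of_nonneg _ _ (by positivity)]
  refine (pgn_add hna _ _).trans (max_le_max ?_ ?_)
  · rw [pgn_mul hna]; apply le_of_eq; field_simp
  · rw [pgn_mul hna]; apply le_of_eq; field_simp

lemma gn_poly (hna : ∀ x y : K, ‖x + y‖ ≤ max ‖x‖ ‖y‖) (P : K[X]) :
    gaussNorm (algebraMap K[X] (RatFunc K) P) = polyGaussNorm P := by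
  have := gn_div hna P 1 one_ne_zero
  simpa [pgn_one] using this

lemma gn_C (hna : ∀ x y : K, ‖x + y‖ ≤ max ‖x‖ ‖y‖) (a : K) :
    gaussNorm (RatFunc.C a) = ‖a‖ := by
  rw [← RatFunc.algebraMap_C, gn_poly hna, pgn_C]

lemma gn_X (hna : ∀ x y : K, ‖x + y‖ ≤ max ‖x‖ ‖y‖) :
    gaussNorm (RatFunc.X : RatFunc K) = 1 := by
  rw [← RatFunc.algebraMap_X, gn_poly hna, pgn_X]

lemma gn_zero : gaussNorm (0 : RatFunc K) = 0 := by
  simp [_root_.gaussNorm, pgn_zero]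

lemma gn_one : gaussNorm (1 : RatFunc K) = 1 := by
  simp [_root_.gaussNorm, pgn_one]

lemma gn_neg (hna : ∀ x y : K, ‖x + y‖ ≤ max ‖x‖ ‖y‖) (f : RatFunc K) :
    gaussNorm (-f) = gaussNorm f := by
  have : -f = RatFunc.C (-1) * f := by simp
  rw [this, gn_mul hna, gn_C hna]; simp

lemma gn_sub (hna : ∀ x y : K, ‖x + y‖ ≤ max ‖x‖ ‖y‖) (f g : RatFunc K) :
    gaussNorm (f - g) ≤ max (gaussNorm f) (gaussNorm g) := by
  rw [sub_eq_add_neg]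
  exact (gn_add hna _ _).trans (by rw [gn_neg hna])

lemma gn_inv (hna : ∀ x y : K, ‖x + y‖ ≤ max ‖x‖ ‖y‖) (f : RatFunc K) :
    gaussNorm f⁻¹ = (gaussNorm f)⁻¹ := by
  by_cases hf : f = 0
  · simp [hf, gn_zero]
  · apply eq_inv_of_mul_eq_one_left
    rw [← gn_mul hna, inv_mul_cancel₀ hf, gn_one]

/-- scaling -/
lemma comp_coeff (q : K) (P : K[X]) (i : ℕ) :
    (P.comp (C q * X)).coeff i = P.coeff i * q ^ i := by
  rw [comp_C_mul_X_coeff]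

lemma comp_ne {q : K} (hq : q ≠ 0) {P : K[X]} (hP : P ≠ 0) : P.comp (C q * X) ≠ 0 := by
  intro h
  apply hP
  ext i
  have := comp_coeff q P i
  rw [h] at this
  simpa [hq] using this.symm

lemma sub_hyp {q : K} (hq : q ≠ 0) :
    nonZeroDivisors K[X] ≤ (nonZeroDivisors K[X]).comap (compRingHom (C q * X)) := by
  intro P hP
  rw [mem_nonZeroDivisors_iff_ne_zero] at hP
  rw [Submonoid.mem_comap, mem_nonZeroDivisors_iff_ne_zero]
  exact comp_ne hq hP

def sig (q : K) (hq : q ≠ 0) : RatFunc K →+* RatFunc K :=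
  RatFunc.mapRingHom (compRingHom (C q * X)) (sub_hyp hq)

lemma sig_apply (q : K) (hq : q ≠ 0) (f : RatFunc K) : ratSubst q f = sig q hq f := by
  unfold sig
  rw [RatFunc.coe_mapRingHom_eq_coe_map, RatFunc.map_apply]
  rfl

lemma sig_div (q : K) (hq : q ≠ 0) (P Q : K[X]) : 
    sig q hq (algebraMap K[X] (RatFunc K) P / algebraMap K[X] (RatFunc K) Q) =
    algebraMap K[X] (RatFunc K) (P.comp (C q * X)) / algebraMap K[X] (RatFunc K) (Q.comp (C q * X)) := by
  unfold sig
  rw [RatFunc.coe_mapRingHom_eq_coe_map, RatFunc.map_apply_div]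
  rfl

lemma sig_poly (q : K) (hq : q ≠ 0) (P : K[X]) : 
    sig q hq (algebraMap K[X] (RatFunc K) P) =
    algebraMap K[X] (RatFunc K) (P.comp (C q * X)) := by
  have := sig_div q hq P 1
  simpa using this

lemma sig_C (q : K) (hq : q ≠ 0) (a : K) : sig q hq (RatFunc.C a) = RatFunc.C a := by
  rw [← RatFunc.algebraMap_C, sig_poly, C_comp]

lemma sig_X (q : K) (hq : q ≠ 0) : sig q hq RatFunc.X = RatFunc.C q * RatFunc.X := by
  rw [← RatFunc.algebraMap_X, sig_poly, X_comp]; simp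

lemma sig_pow (q : K) (hq : q ≠ 0) (k : ℕ) (f : RatFunc K) :
    (sig q hq)^[k] f = sig (q ^ k) (pow_ne_zero k hq) f := by
  induction k with
  | zero =>
    obtain ⟨P, Q, hQ, rfl⟩ := ex_rep f
    rw [sig_div]; simp
  | succ k ih =>
    rw [Function.iterate_succ_apply', ih]
    obtain ⟨P, Q, hQ, rfl⟩ := ex_rep f
    rw [sig_div, sig_div, sig_div]
    have : ∀ R : K[X], (R.comp (C (q ^ k) * X)).comp (C q * X) = R.comp (C (q ^ (k+1)) * X) := by
      intro R
      ext i
      rw [comp_coeff, comp_coeff, comp_coeff]; ring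
    rw [this, this]

lemma pgn_comp (q : K) (hq : ‖q‖ = 1) (P : K[X]) :
    polyGaussNorm (P.comp (C q * X)) = polyGaussNorm P := by
  unfold polyGaussNorm
  simp only [comp_coeff, norm_mul, norm_pow, hq, one_pow, mul_one]

lemma norm_sub_le_max (hna : ∀ x y : K, ‖x + y‖ ≤ max ‖x‖ ‖y‖) (x y : K) :
    ‖x - y‖ ≤ max ‖x‖ ‖y‖ := by
  rw [sub_eq_add_neg]; simpa using hna x (-y)

lemma norm_pow_sub_one (hna : ∀ x y : K, ‖x + y‖ ≤ max ‖x‖ ‖y‖) (q : K) (hq : ‖q‖ = 1) (i : ℕ) :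
    ‖q ^ i - 1‖ ≤ ‖q - 1‖ := by
  induction i with
  | zero => simp
  | succ i ih =>
    have : q ^ (i+1) - 1 = q * (q ^ i - 1) + (q - 1) := by ring
    rw [this]
    refine (hna _ _).trans (max_le ?_ le_rfl)
    rw [norm_mul, hq, one_mul]; exact ih

lemma pgn_comp_sub (hna : ∀ x y : K, ‖x + y‖ ≤ max ‖x‖ ‖y‖) (q : K) (hq : ‖q‖ = 1) (P : K[X]) :
    polyGaussNorm (P.comp (C q * X) - P) ≤ ‖q - 1‖ * polyGaussNorm P := by
  apply pgn_le
  intro i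
  have : (P.comp (C q * X) - P).coeff i = (q ^ i - 1) * P.coeff i := by
    rw [coeff_sub, comp_coeff]; ring
  rw [this, norm_mul]
  exact mul_le_mul (norm_pow_sub_one hna q hq i) (le_pgn _ _) (norm_nonneg _) (norm_nonneg _)

lemma ne0 {q : K} (hq : ‖q‖ = 1) : q ≠ 0 := by
  rintro rfl; simp at hq

lemma gn_sig (hna : ∀ x y : K, ‖x + y‖ ≤ max ‖x‖ ‖y‖) (q : K) (hq : ‖q‖ = 1) (f : RatFunc K) :
    gaussNorm (sig q (ne0 hq) f) = gaussNorm f := by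
  obtain ⟨P, Q, hQ, rfl⟩ := ex_rep f
  rw [sig_div, gn_div hna _ _ (comp_ne (ne0 hq) hQ), gn_div hna _ _ hQ, pgn_comp q hq, pgn_comp q hq]

lemma gn_sig_sub (hna : ∀ x y : K, ‖x + y‖ ≤ max ‖x‖ ‖y‖) (q : K) (hq : ‖q‖ = 1) (f : RatFunc K) :
    gaussNorm (sig q (ne0 hq) f - f) ≤ ‖q - 1‖ * gaussNorm f := by
  obtain ⟨P, Q, hQ, rfl⟩ := ex_rep f
  have hQ' := comp_ne (ne0 hq) hQ
  have e : (P.comp (C q * X)) * Q - (Q.comp (C q * X)) * P =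
      (P.comp (C q * X) - P) * Q + P * (-(Q.comp (C q * X) - Q)) := by ring
  have hneg : ∀ R : K[X], polyGaussNorm (-R) = polyGaussNorm R := by
    intro R; unfold polyGaussNorm; simp
  rw [sig_div, div_sub_div _ _ (am_ne hQ') (am_ne hQ), ← map_mul, ← map_mul, ← map_mul, ← map_sub,
    gn_div hna _ _ (mul_ne_zero hQ' hQ), gn_div hna _ _ hQ, e, pgn_mul hna, pgn_comp q hq]
  have h1 := pgn_pos hQ
  have h2 := pgn_nonneg P
  rw [div_le_iff₀ (by positivity)]
  have e2 : ‖q - 1‖ * (polyGaussNorm P / polyGaussNorm Q) * (polyGaussNorm Q * polyGaussNorm Q)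
    = ‖q - 1‖ * polyGaussNorm P * polyGaussNorm Q := by field_simp
  rw [e2]
  refine (pgn_add hna _ _).trans (max_le ?_ ?_)
  · rw [pgn_mul hna]
    exact mul_le_mul_of_nonneg_right (pgn_comp_sub hna q hq P) h1.le
  · rw [pgn_mul hna, hneg]
    calc _ ≤ polyGaussNorm P * (‖q - 1‖ * polyGaussNorm Q) :=
          mul_le_mul_of_nonneg_left (pgn_comp_sub hna q hq Q) h2
      _ = _ := by ring

def Bd {μ : ℕ} (c : ℝ) (M : Matrix (Fin μ) (Fin μ) (RatFunc K)) : Prop :=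
  ∀ i j, _root_.gaussNorm (M i j) ≤ c

variable {μ : ℕ}

lemma gn_sum (hna : ∀ x y : K, ‖x + y‖ ≤ max ‖x‖ ‖y‖) {ι : Type*} (s : Finset ι)
    (f : ι → RatFunc K) {c : ℝ} (hc : 0 ≤ c) (h : ∀ i ∈ s, _root_.gaussNorm (f i) ≤ c) :
    _root_.gaussNorm (∑ i ∈ s, f i) ≤ c := by
  classical
  induction s using Finset.induction_on with
  | empty => simpa [gn_zero] using hc
  | insert a s ha ih =>
    rw [Finset.sum_insert ha]
    refine (gn_add hna _ _).trans (max_le (h a (by simp)) (ih fun i hi => h i (by simp [hi])))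

lemma Bd.add (hna : ∀ x y : K, ‖x + y‖ ≤ max ‖x‖ ‖y‖) {c : ℝ}
    {M N : Matrix (Fin μ) (Fin μ) (RatFunc K)} (hM : Bd c M) (hN : Bd c N) : Bd c (M + N) :=
  fun i j => (gn_add hna _ _).trans (max_le (hM i j) (hN i j))

lemma Bd.sub (hna : ∀ x y : K, ‖x + y‖ ≤ max ‖x‖ ‖y‖) {c : ℝ}
    {M N : Matrix (Fin μ) (Fin μ) (RatFunc K)} (hM : Bd c M) (hN : Bd c N) : Bd c (M - N) :=
  fun i j => (gn_sub hna _ _).trans (max_le (hM i j) (hN i j))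

lemma Bd.mul (hna : ∀ x y : K, ‖x + y‖ ≤ max ‖x‖ ‖y‖) {a b : ℝ} (ha : 0 ≤ a) (hb : 0 ≤ b)
    {M N : Matrix (Fin μ) (Fin μ) (RatFunc K)} (hM : Bd a M) (hN : Bd b N) :
    Bd (a * b) (M * N) := by
  intro i j
  rw [Matrix.mul_apply]
  apply gn_sum hna _ _ (by positivity)
  intro k _
  rw [gn_mul hna]
  exact mul_le_mul (hM i k) (hN k j) (gn_nonneg _) ha

lemma Bd.smul (hna : ∀ x y : K, ‖x + y‖ ≤ max ‖x‖ ‖y‖) {c : ℝ} (f : RatFunc K)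
    {M : Matrix (Fin μ) (Fin μ) (RatFunc K)} (hM : Bd c M) :
    Bd (_root_.gaussNorm f * c) (f • M) := by
  intro i j
  rw [Matrix.smul_apply, smul_eq_mul, gn_mul hna]
  exact mul_le_mul_of_nonneg_left (hM i j) (gn_nonneg _)

lemma Bd.mono {a b : ℝ} (h : a ≤ b) {M : Matrix (Fin μ) (Fin μ) (RatFunc K)} (hM : Bd a M) :
    Bd b M := fun i j => (hM i j).trans h

lemma Bd.sum (hna : ∀ x y : K, ‖x + y‖ ≤ max ‖x‖ ‖y‖) {ι : Type*} (s : Finset ι)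
    (f : ι → Matrix (Fin μ) (Fin μ) (RatFunc K)) {c : ℝ} (hc : 0 ≤ c) (h : ∀ i ∈ s, Bd c (f i)) :
    Bd c (∑ i ∈ s, f i) := by
  intro i j
  rw [Matrix.sum_apply]
  exact gn_sum hna _ _ hc fun k hk => h k hk i j

lemma Bd_one : Bd 1 (1 : Matrix (Fin μ) (Fin μ) (RatFunc K)) := by
  intro i j
  by_cases h : i = j
  · subst h; simp [gn_one]
  · simp [h, gn_zero]

lemma Bd_iff {M : Matrix (Fin μ) (Fin μ) (RatFunc K)} {c : ℝ} (hc : 0 ≤ c) :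
    matGaussNorm M ≤ c ↔ Bd c M := by
  unfold matGaussNorm
  constructor
  · intro h i j
    refine le_trans ?_ h
    refine le_trans ?_ (le_ciSup (Set.finite_range _).bddAbove i)
    exact le_ciSup (f := fun j => _root_.gaussNorm (M i j)) (Set.finite_range _).bddAbove j
  · intro h
    exact Real.iSup_le (fun i => Real.iSup_le (fun j => h i j) hc) hc

def Del (q : K) (G F : Matrix (Fin μ) (Fin μ) (RatFunc K)) : Matrix (Fin μ) (Fin μ) (RatFunc K) :=
  G * F.map (ratSubst q) + F.map (qDeriv q)

lemma Gseq_eq (q : K) (G : Matrix (Fin μ) (Fin μ) (RatFunc K)) (k : ℕ) :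
    Gseq q G k = (Del q G)^[k] 1 := by
  induction k with
  | zero => rfl
  | succ k ih => rw [Function.iterate_succ_apply', ← ih]; rfl

lemma gn_qDeriv (hna : ∀ x y : K, ‖x + y‖ ≤ max ‖x‖ ‖y‖) (q : K) (hq : ‖q‖ = 1) (hq1 : q ≠ 1)
    (f : RatFunc K) : _root_.gaussNorm (qDeriv q f) ≤ _root_.gaussNorm f := by
  unfold qDeriv
  have h : 0 < ‖q - 1‖ := by rw [norm_pos_iff]; exact sub_ne_zero.mpr hq1
  rw [sig_apply q (ne0 hq), div_eq_mul_inv, gn_mul hna, gn_inv hna, gn_mul hna, gn_C hna, gn_X hna,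
    mul_one, ← div_eq_mul_inv, div_le_iff₀ h, mul_comm]
  exact gn_sig_sub hna q hq f

lemma Bd_map_sig (hna : ∀ x y : K, ‖x + y‖ ≤ max ‖x‖ ‖y‖) (q : K) (hq : ‖q‖ = 1) {c : ℝ}
    {F : Matrix (Fin μ) (Fin μ) (RatFunc K)} (hF : Bd c F) : Bd c (F.map (sig q (ne0 hq))) := by
  intro i j
  rw [Matrix.map_apply, gn_sig hna q hq]; exact hF i j

lemma map_sig_eq (q : K) (hq : ‖q‖ = 1) (F : Matrix (Fin μ) (Fin μ) (RatFunc K)) :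
    F.map (ratSubst q) = F.map (sig q (ne0 hq)) := by
  ext i j : 2
  simp [sig_apply q (ne0 hq)]

lemma Bd_Del (hna : ∀ x y : K, ‖x + y‖ ≤ max ‖x‖ ‖y‖) (q : K) (hq : ‖q‖ = 1) (hq1 : q ≠ 1) {c : ℝ}
    (hc : 0 ≤ c) {G F : Matrix (Fin μ) (Fin μ) (RatFunc K)} (hG : Bd 1 G) (hF : Bd c F) :
    Bd c (Del q G F) := by
  unfold Del
  refine Bd.add hna ?_ ?_
  · rw [map_sig_eq q hq]
    simpa using Bd.mul hna zero_le_one hc hG (Bd_map_sig hna q hq hF)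
  · intro i j
    exact (gn_qDeriv hna q hq hq1 _).trans (hF i j)

lemma Bd_Del_iter (hna : ∀ x y : K, ‖x + y‖ ≤ max ‖x‖ ‖y‖) (q : K) (hq : ‖q‖ = 1) (hq1 : q ≠ 1)
    {c : ℝ} (hc : 0 ≤ c) {G F : Matrix (Fin μ) (Fin μ) (RatFunc K)} (hG : Bd 1 G) (hF : Bd c F)
    (k : ℕ) : Bd c ((Del q G)^[k] F) := by
  induction k with
  | zero => exact hF
  | succ k ih => rw [Function.iterate_succ_apply']; exact Bd_Del hna q hq hq1 hc hG ih

/-- The operator `F ↦ A σ(F)`. -/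
def TOp (q : K) (hq : q ≠ 0) (A : Matrix (Fin μ) (Fin μ) (RatFunc K)) :
    Module.End K (Matrix (Fin μ) (Fin μ) (RatFunc K)) where
  toFun F := A * F.map (sig q hq)
  map_add' F H := by
    rw [← mul_add]; congr 1; ext i j : 2; simp
  map_smul' a F := by
    rw [RingHom.id_apply, ← Matrix.mul_smul]; congr 1; ext i j : 2
    simp [RatFunc.smul_eq_C_mul, sig_C]

lemma TOp_apply (q : K) (hq : q ≠ 0) (A F : Matrix (Fin μ) (Fin μ) (RatFunc K)) :
    TOp q hq A F = A * F.map (sig q hq) := rfl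

lemma TOp_smul (q : K) (hq : q ≠ 0) (A F : Matrix (Fin μ) (Fin μ) (RatFunc K)) (f : RatFunc K) :
    TOp q hq A (f • F) = sig q hq f • TOp q hq A F := by
  rw [TOp_apply, TOp_apply, ← Matrix.mul_smul]; congr 1; ext i j : 2; simp

lemma TOp_mul (q : K) (hq : q ≠ 0) (A F H : Matrix (Fin μ) (Fin μ) (RatFunc K)) :
    TOp q hq A (F * H) = TOp q hq A F * H.map (sig q hq) := by
  rw [TOp_apply, TOp_apply, mul_assoc, Matrix.map_mul]

lemma TOp_pow_mul (q : K) (hq : q ≠ 0) (A F H : Matrix (Fin μ) (Fin μ) (RatFunc K)) (k : ℕ) :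
    (TOp q hq A ^ k) (F * H) = (TOp q hq A ^ k) F * H.map (sig (q ^ k) (pow_ne_zero k hq)) := by
  induction k with
  | zero =>
    have : H.map (sig (q ^ 0) (pow_ne_zero 0 hq)) = H := by
      ext i j : 2
      rw [Matrix.map_apply, ← sig_pow q hq]; rfl
    rw [this]; simp
  | succ k ih =>
    rw [pow_succ', Module.End.mul_apply, Module.End.mul_apply, ih, TOp_mul]
    congr 1
    ext i j : 2
    rw [Matrix.map_apply, Matrix.map_apply, Matrix.map_apply, ← sig_pow q hq, ← sig_pow q hq,
      Function.iterate_succ_apply']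

lemma Del_eq (q : K) (hq : ‖q‖ = 1) (hq1 : q ≠ 1) (G F : Matrix (Fin μ) (Fin μ) (RatFunc K)) :
    Del q G F = (RatFunc.C (q - 1) * RatFunc.X)⁻¹ •
      (TOp q (ne0 hq) (1 + (RatFunc.C (q - 1) * RatFunc.X) • G) F - F) := by
  unfold Del
  rw [map_sig_eq q hq, TOp_apply]
  have h : RatFunc.C (q - 1) * RatFunc.X ≠ (0 : RatFunc K) :=
    mul_ne_zero (by rw [Ne, map_eq_zero]; exact sub_ne_zero.mpr hq1) RatFunc.X_ne_zero
  rw [add_mul, one_mul, Matrix.smul_mul, add_sub_right_comm, smul_add, smul_smul,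
    inv_mul_cancel₀ h, one_smul, add_comm]
  congr 1
  ext i j : 2
  simp only [Matrix.map_apply, Matrix.smul_apply, Matrix.sub_apply, qDeriv, smul_eq_mul,
    sig_apply q (ne0 hq)]
  rw [div_eq_inv_mul]

def PP (q : K) (k : ℕ) : K[X] := ∏ i ∈ Finset.range k, (X - C (q ^ i))

lemma PP_succ (q : K) (k : ℕ) : PP q (k+1) = (X - C (q ^ k)) * PP q k := by
  unfold PP; rw [Finset.prod_range_succ, mul_comm]

lemma Del_iter_eq (q : K) (hq : ‖q‖ = 1) (hq1 : ‖q - 1‖ = 1)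
    (G : Matrix (Fin μ) (Fin μ) (RatFunc K)) (k : ℕ) :
    ∃ w : K, ‖w‖ = 1 ∧ ∀ F, (Del q G)^[k] F = (RatFunc.C w * (RatFunc.X ^ k)⁻¹) •
      (aeval (TOp q (ne0 hq) (1 + (RatFunc.C (q - 1) * RatFunc.X) • G)) (PP q k)) F := by
  have hne : q - 1 ≠ 0 := ne0 hq1
  induction k with
  | zero => exact ⟨1, by simp, fun F => by simp [PP]⟩
  | succ k ih =>
    obtain ⟨w, hw, h⟩ := ih
    refine ⟨(q-1)⁻¹ * (q^k)⁻¹ * w, by simp [hq, hq1, hw], fun F => ?_⟩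
    rw [Function.iterate_succ_apply', h, Del_eq q hq (sub_ne_zero.mp hne), TOp_smul, PP_succ,
      map_mul (aeval _), Module.End.mul_apply]
    set T := TOp q (ne0 hq) (1 + (RatFunc.C (q - 1) * RatFunc.X) • G)
    set E := (aeval T (PP q k)) F
    have e1 : (aeval T) (X - C (q ^ k)) E = T E - RatFunc.C (q ^ k) • E := by
      simp only [map_sub, aeval_X, aeval_C, LinearMap.sub_apply, Module.algebraMap_end_apply]
      congr 1
      ext i j : 2
      simp only [Matrix.smul_apply, smul_eq_mul, RatFunc.smul_eq_C_mul]
    have hqk : RatFunc.C (q ^ k) ≠ (0 : RatFunc K) := by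
      rw [Ne, map_eq_zero]; exact pow_ne_zero _ (ne0 hq)
    have e2 : sig q (ne0 hq) (RatFunc.C w * (RatFunc.X ^ k)⁻¹) =
        (RatFunc.C (q ^ k))⁻¹ * (RatFunc.C w * (RatFunc.X ^ k)⁻¹) := by
      rw [map_mul, sig_C, map_inv₀, map_pow, sig_X, mul_pow, mul_inv, map_pow]; ring
    rw [e1, e2, smul_sub, smul_sub, smul_smul, smul_smul, smul_smul]
    congr 2
    · simp only [map_mul, map_inv₀, pow_succ, mul_inv]; ring
    · simp only [map_mul, map_inv₀, pow_succ, mul_inv]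
      linear_combination (-((RatFunc.C (q - 1))⁻¹ * RatFunc.X⁻¹ * (RatFunc.C w * (RatFunc.X ^ k)⁻¹))) *
        inv_mul_cancel₀ hqk

lemma PP_comp (q : K) (k : ℕ) :
    (C q * X - C (q ^ k)) * (PP q k).comp (C q * X) = C (q ^ k) * ((C q * X - 1) * PP q k) := by
  induction k with
  | zero => simp [PP]
  | succ k ih =>
    rw [PP_succ, mul_comp, sub_comp, X_comp, C_comp, ih]
    simp only [pow_succ, map_mul]
    ring

lemma PP_rec (q : K) (k i : ℕ) :
    (PP q k).coeff (i+1) * (q ^ k * (1 - q ^ (i+1))) = (PP q k).coeff i * (q ^ (k+1) - q ^ (i+1)) := by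
  have h := congrArg (fun P => P.coeff (i+1)) (PP_comp q k)
  simp only [sub_mul, mul_assoc, coeff_sub, coeff_C_mul, coeff_X_mul, comp_coeff, one_mul] at h
  linear_combination h

lemma PP_monic (q : K) (k : ℕ) : (PP q k).Monic := monic_prod_of_monic _ _ fun _ _ => monic_X_sub_C _

lemma PP_natDegree (q : K) (k : ℕ) : (PP q k).natDegree = k := by
  unfold PP
  rw [natDegree_prod_of_monic _ _ fun _ _ => monic_X_sub_C _]
  simp only [natDegree_X_sub_C]; simp

lemma PP_coeff_zero (q : K) (hq : ‖q‖ = 1) (k : ℕ) : ‖(PP q k).coeff 0‖ = 1 := by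
  rw [coeff_zero_eq_eval_zero, PP, eval_prod, norm_prod]
  apply Finset.prod_eq_one
  intro i _
  simp [hq]

lemma PP_mid (hna : ∀ x y : K, ‖x + y‖ ≤ max ‖x‖ ‖y‖) (q : K) (hq : ‖q‖ = 1) (κ : ℕ)
    (hmin : ∀ m : ℕ, 0 < m → m < κ → ‖1 - q ^ m‖ = 1) (i : ℕ) (hi : i + 1 < κ) :
    ‖(PP q κ).coeff (i+1)‖ ≤ ‖1 - q ^ κ‖ := by
  have key : ‖(PP q κ).coeff (i+1)‖ = ‖(PP q κ).coeff i‖ * ‖q ^ (κ+1) - q ^ (i+1)‖ := by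
    rw [← norm_mul, ← PP_rec, norm_mul, norm_mul, norm_pow, hq, hmin _ (by omega) hi]; simp
  induction i with
  | zero =>
    rw [key, PP_coeff_zero q hq]
    have : q ^ (κ+1) - q ^ (0+1) = - (q * (1 - q ^ κ)) := by ring
    rw [this, norm_neg, norm_mul, hq]; simp
  | succ i ih =>
    rw [key]
    have h1 : ‖q ^ (κ+1) - q ^ (i+1+1)‖ ≤ 1 := (norm_sub_le_max hna _ _).trans (by simp [hq])
    have h2 := ih (by omega) (by
      rw [← norm_mul, ← PP_rec, norm_mul, norm_mul, norm_pow, hq, hmin _ (by omega) (by omega)]; simp)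
    calc _ ≤ ‖1 - q ^ κ‖ * 1 := mul_le_mul h2 h1 (norm_nonneg _) (norm_nonneg _)
      _ = _ := mul_one _

lemma norm_sum_le' (hna : ∀ x y : K, ‖x + y‖ ≤ max ‖x‖ ‖y‖) {ι : Type*} (s : Finset ι)
    (f : ι → K) {c : ℝ} (hc : 0 ≤ c) (h : ∀ i ∈ s, ‖f i‖ ≤ c) :
    ‖∑ i ∈ s, f i‖ ≤ c := by
  classical
  induction s using Finset.induction_on with
  | empty => simpa using hc
  | insert a s ha ih =>
    rw [Finset.sum_insert ha]
    refine (hna _ _).trans (max_le (h a (by simp)) (ih fun i hi => h i (by simp [hi])))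

lemma PP_diff (hna : ∀ x y : K, ‖x + y‖ ≤ max ‖x‖ ‖y‖) (q : K) (hq : ‖q‖ = 1) (κ : ℕ) (hκ : 0 < κ)
    (hmin : ∀ m : ℕ, 0 < m → m < κ → ‖1 - q ^ m‖ = 1) (i : ℕ) :
    ‖(PP q κ - (X ^ κ - 1)).coeff i‖ ≤ ‖1 - q ^ κ‖ := by
  have htop : (PP q κ).coeff κ = 1 := by
    have := PP_monic q κ
    rw [Monic, leadingCoeff, PP_natDegree] at this; exact this
  rcases Nat.eq_zero_or_pos i with rfl | hi
  · have e : (PP q κ).eval 1 = 0 := by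
      rw [PP, eval_prod]
      apply Finset.prod_eq_zero (Finset.mem_range.mpr hκ); simp
    rw [eval_eq_sum_range, PP_natDegree, Finset.sum_range_succ, htop] at e
    obtain ⟨k, rfl⟩ : ∃ k, κ = k + 1 := ⟨κ - 1, by omega⟩
    rw [Finset.sum_range_succ'] at e
    simp only [one_pow, mul_one] at e
    have e2 : (PP q (k+1) - (X ^ (k+1) - 1)).coeff 0 = -∑ i ∈ Finset.range k, (PP q (k+1)).coeff (i+1) := by
      simp only [coeff_sub, coeff_X_pow, coeff_one_zero]
      rw [if_neg (by omega)]
      linear_combination e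
    rw [e2, norm_neg]
    apply norm_sum_le' hna _ _ (norm_nonneg _)
    intro i hi
    rw [Finset.mem_range] at hi
    exact PP_mid hna q hq _ hmin i (by omega)
  · have e1 : (PP q κ - (X ^ κ - 1)).coeff i = (PP q κ).coeff i - (if i = κ then 1 else 0) := by
      simp only [coeff_sub, coeff_X_pow, coeff_one]
      rw [if_neg (show ¬ i = 0 by omega), sub_zero]
    rw [e1]
    rcases lt_trichotomy i κ with h | h | h
    · rw [if_neg (by omega), sub_zero]
      obtain ⟨k, rfl⟩ : ∃ k, i = k + 1 := ⟨i - 1, by omega⟩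
      exact PP_mid hna q hq _ hmin k h
    · subst h; simp [htop]
    · rw [if_neg (by omega), sub_zero, coeff_eq_zero_of_natDegree_lt (by rw [PP_natDegree]; exact h)]
      simp

lemma Bd_TOp (hna : ∀ x y : K, ‖x + y‖ ≤ max ‖x‖ ‖y‖) (q : K) (hq : ‖q‖ = 1) {c : ℝ} (hc : 0 ≤ c)
    {A F : Matrix (Fin μ) (Fin μ) (RatFunc K)} (hA : Bd 1 A) (hF : Bd c F) (k : ℕ) :
    Bd c ((TOp q (ne0 hq) A ^ k) F) := by
  induction k with
  | zero => simpa using hF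
  | succ k ih =>
    rw [pow_succ', Module.End.mul_apply, TOp_apply]
    simpa using Bd.mul hna zero_le_one hc hA (Bd_map_sig hna q hq ih)

lemma Bd_aeval (hna : ∀ x y : K, ‖x + y‖ ≤ max ‖x‖ ‖y‖) (q : K) (hq : ‖q‖ = 1) {c s : ℝ} (hc : 0 ≤ c)
    (hs : 0 ≤ s)
    {A F : Matrix (Fin μ) (Fin μ) (RatFunc K)} (hA : Bd 1 A) (hF : Bd c F) (D : K[X])
    (hD : ∀ i, ‖D.coeff i‖ ≤ s) :
    Bd (s * c) (aeval (TOp q (ne0 hq) A) D F) := by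
  rw [aeval_eq_sum_range, LinearMap.sum_apply]
  apply Bd.sum hna _ _ (by positivity)
  intro i _
  have : (D.coeff i • TOp q (ne0 hq) A ^ i) F = RatFunc.C (D.coeff i) • ((TOp q (ne0 hq) A ^ i) F) := by
    rw [LinearMap.smul_apply]
    ext i j : 2
    simp only [Matrix.smul_apply, smul_eq_mul, RatFunc.smul_eq_C_mul]
  rw [this]
  refine (Bd.smul hna _ (Bd_TOp hna q hq hc hA hF i)).mono ?_
  rw [gn_C hna]
  exact mul_le_mul_of_nonneg_right (hD i) hc

lemma Bd_A (hna : ∀ x y : K, ‖x + y‖ ≤ max ‖x‖ ‖y‖) (q : K) (hq1 : ‖q - 1‖ = 1)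
    {G : Matrix (Fin μ) (Fin μ) (RatFunc K)} (hG : Bd 1 G) :
    Bd 1 (1 + (RatFunc.C (q - 1) * RatFunc.X) • G) := by
  refine Bd_one.add hna ((hG.smul hna _).mono ?_)
  rw [gn_mul hna, gn_C hna, gn_X hna, hq1]; simp

lemma Bd_comm (hna : ∀ x y : K, ‖x + y‖ ≤ max ‖x‖ ‖y‖) (q : K) (hq : ‖q‖ = 1) (hq1 : ‖q - 1‖ = 1)
    (κ : ℕ) (hκ : 0 < κ) (hmin : ∀ m : ℕ, 0 < m → m < κ → ‖1 - q ^ m‖ = 1)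
    {a b : ℝ} (ha : 0 ≤ a) (hb : 0 ≤ b)
    {G F H : Matrix (Fin μ) (Fin μ) (RatFunc K)} (hG : Bd 1 G) (hF : Bd a F) (hH : Bd b H) :
    Bd (‖1 - q ^ κ‖ * (a * b)) ((Del q G)^[κ] (F * H) - (Del q G)^[κ] F * H) := by
  obtain ⟨w, hw, h⟩ := Del_iter_eq q hq hq1 G κ
  rw [h, h, Matrix.smul_mul, ← smul_sub]
  have hA := Bd_A hna q hq1 hG
  set A := 1 + (RatFunc.C (q - 1) * RatFunc.X) • G
  set T := TOp q (ne0 hq) A with hT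
  set D := PP q κ - (X ^ κ - 1) with hD
  have hP : PP q κ = D + (X ^ κ - 1) := by rw [hD]; ring
  have hDs := PP_diff hna q hq κ hκ hmin
  rw [← hD] at hDs
  have ev : ∀ M, aeval T (PP q κ) M = aeval T D M + ((T ^ κ) M - M) := by
    intro M; rw [hP]; simp
  rw [ev, ev, hT, TOp_pow_mul, ← hT]
  have e : (aeval T D) (F * H) + ((T ^ κ) F * H.map (sig (q ^ κ) (pow_ne_zero κ (ne0 hq))) - F * H) -
      ((aeval T D) F + ((T ^ κ) F - F)) * H =
      (aeval T D) (F * H) + ((T ^ κ) F * (H.map (sig (q ^ κ) (pow_ne_zero κ (ne0 hq))) - H) -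
        (aeval T D) F * H) := by
    noncomm_ring
  rw [e]
  set s := ‖1 - q ^ κ‖ with hs
  have hs0 : 0 ≤ s := norm_nonneg _
  have b1 : Bd (s * (a * b)) ((aeval T D) (F * H)) :=
    Bd_aeval hna q hq (by positivity) hs0 hA (hF.mul hna ha hb hH) D hDs
  have b2 : Bd (s * (a * b)) ((aeval T D) F * H) := by
    have := (Bd_aeval hna q hq ha hs0 hA hF D hDs).mul hna (by positivity) hb hH
    rwa [mul_assoc] at this
  have b3 : Bd (s * b) (H.map (sig (q ^ κ) (pow_ne_zero κ (ne0 hq))) - H) := by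
    intro i j
    have hqk : ‖q ^ κ‖ = 1 := by simp [hq]
    refine (gn_sig_sub hna (q ^ κ) hqk (H i j)).trans ?_
    rw [norm_sub_rev]
    exact mul_le_mul_of_nonneg_left (hH i j) hs0
  have b4 : Bd (s * (a * b)) ((T ^ κ) F * (H.map (sig (q ^ κ) (pow_ne_zero κ (ne0 hq))) - H)) := by
    refine ((Bd_TOp hna q hq ha hA hF κ).mul hna ha (by positivity) b3).mono (le_of_eq (by ring))
  refine ((b1.add hna (b4.sub hna b2)).smul hna _).mono (le_of_eq ?_)
  rw [gn_mul hna, gn_C hna, hw, gn_inv hna]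
  have : ∀ k : ℕ, _root_.gaussNorm ((RatFunc.X : RatFunc K) ^ k) = 1 := by
    intro k
    induction k with
    | zero => simp [gn_one]
    | succ k ih => rw [pow_succ, gn_mul hna, ih, gn_X hna, one_mul]
  rw [this]; simp

lemma Del_iter_add (q : K) (hq : ‖q‖ = 1) (hq1 : ‖q - 1‖ = 1)
    (G F H : Matrix (Fin μ) (Fin μ) (RatFunc K)) (k : ℕ) :
    (Del q G)^[k] (F + H) = (Del q G)^[k] F + (Del q G)^[k] H := by
  obtain ⟨w, hw, h⟩ := Del_iter_eq q hq hq1 G k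
  rw [h, h, h, map_add, smul_add]

lemma Bd_comm_iter (hna : ∀ x y : K, ‖x + y‖ ≤ max ‖x‖ ‖y‖) (q : K) (hq : ‖q‖ = 1) (hq1 : ‖q - 1‖ = 1)
    (κ : ℕ) (hκ : 0 < κ) (hmin : ∀ m : ℕ, 0 < m → m < κ → ‖1 - q ^ m‖ = 1)
    {b : ℝ} (hb : 0 ≤ b)
    {G H : Matrix (Fin μ) (Fin μ) (RatFunc K)} (hG : Bd 1 G) (hH : Bd b H) (j : ℕ) :
    Bd (‖1 - q ^ κ‖ * b) ((Del q G)^[j * κ] H - (Del q G)^[j * κ] 1 * H) := by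
  have hs0 : 0 ≤ ‖1 - q ^ κ‖ := norm_nonneg _
  have hne : q ≠ 1 := sub_ne_zero.mp (ne0 hq1)
  induction j with
  | zero =>
    have : (Del q G)^[0 * κ] H - (Del q G)^[0 * κ] 1 * H = 0 := by simp
    rw [this]
    intro i j
    simpa [gn_zero] using mul_nonneg hs0 hb
  | succ j ih =>
    set E := (Del q G)^[j * κ] H - (Del q G)^[j * κ] 1 * H with hE
    have e1 : (Del q G)^[j * κ] H = (Del q G)^[j * κ] 1 * H + E := by rw [hE]; abel
    have e2 : (j + 1) * κ = κ + j * κ := by ring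
    rw [e2, Function.iterate_add_apply, Function.iterate_add_apply, e1, Del_iter_add q hq hq1,
      add_sub_right_comm]
    refine Bd.add hna ?_ (Bd_Del_iter hna q hq hne (by positivity) hG ih κ)
    have := Bd_comm hna q hq hq1 κ hκ hmin zero_le_one hb hG
      (Bd_Del_iter hna q hq hne zero_le_one hG Bd_one (j * κ)) hH
    rwa [one_mul] at this

lemma Bd_main (hna : ∀ x y : K, ‖x + y‖ ≤ max ‖x‖ ‖y‖) (q : K) (hq : ‖q‖ = 1) (hq1 : ‖q - 1‖ = 1)
    (κ : ℕ) (hκ : 0 < κ) (hmin : ∀ m : ℕ, 0 < m → m < κ → ‖1 - q ^ m‖ = 1)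
    {G : Matrix (Fin μ) (Fin μ) (RatFunc K)} (hG : Bd 1 G) (n : ℕ)
    (hred : Bd ‖1 - q ^ κ‖ (Gseq q G (n * κ))) (m : ℕ) :
    Bd (‖1 - q ^ κ‖ ^ m) (Gseq q G (m * (n * κ))) := by
  induction m with
  | zero => simpa [Gseq] using Bd_one
  | succ m ih =>
    have e : (m + 1) * (n * κ) = n * κ + m * (n * κ) := by ring
    have hs0 : 0 ≤ ‖1 - q ^ κ‖ := norm_nonneg _
    rw [Gseq_eq] at hred ih ⊢
    rw [e, Function.iterate_add_apply]
    have h1 := Bd_comm_iter hna q hq hq1 κ hκ hmin (by positivity) hG ih n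
    have h2 := hred.mul hna hs0 (by positivity) ih
    have := h1.add hna h2
    rw [sub_add_cancel] at this
    rwa [pow_succ']

lemma norm_natCast_le_one' (hna : ∀ x y : K, ‖x + y‖ ≤ max ‖x‖ ‖y‖) (m : ℕ) : ‖(m : K)‖ ≤ 1 := by
  induction m with
  | zero => simp
  | succ m ih =>
    push_cast
    exact (hna _ _).trans (max_le ih (by simp))

lemma norm_intCast_le_one' (hna : ∀ x y : K, ‖x + y‖ ≤ max ‖x‖ ‖y‖) (m : ℤ) : ‖(m : K)‖ ≤ 1 := by
  obtain ⟨k, rfl | rfl⟩ := m.eq_nat_or_neg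
  · simpa using norm_natCast_le_one' hna k
  · simpa using norm_natCast_le_one' hna k

lemma norm_coprime (hna : ∀ x y : K, ‖x + y‖ ≤ max ‖x‖ ‖y‖) {p l : ℕ} (hpv : ‖(p : K)‖ < 1)
    (h : Nat.Coprime p l) : ‖(l : K)‖ = 1 := by
  apply le_antisymm (norm_natCast_le_one' hna l)
  by_contra hlt
  push Not at hlt
  have hb := Nat.gcd_eq_gcd_ab p l
  rw [h.gcd_eq_one] at hb
  have hb' : (1 : K) = (p : K) * ((p.gcdA l : ℤ) : K) + (l : K) * ((p.gcdB l : ℤ) : K) := by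
    exact_mod_cast congrArg (Int.cast : ℤ → K) hb
  have h1 : ‖(1 : K)‖ < 1 := by
    rw [hb']
    refine (hna _ _).trans_lt (max_lt ?_ ?_)
    · rw [norm_mul]
      exact (mul_le_of_le_one_right (norm_nonneg _) (norm_intCast_le_one' hna _)).trans_lt hpv
    · rw [norm_mul]
      exact (mul_le_of_le_one_right (norm_nonneg _) (norm_intCast_le_one' hna _)).trans_lt hlt
  simp at h1

lemma norm_nat_val (hna : ∀ x y : K, ‖x + y‖ ≤ max ‖x‖ ‖y‖) {p : ℕ} (hp : p.Prime)
    (hpv : ‖(p : K)‖ < 1) {m : ℕ} (hm : m ≠ 0) : ‖(m : K)‖ = ‖(p : K)‖ ^ padicValNat p m := by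
  have h := Nat.ordProj_mul_ordCompl_eq_self m p
  have hc := norm_coprime hna hpv (Nat.coprime_ordCompl hp hm)
  conv_lhs => rw [← h]
  rw [Nat.cast_mul, norm_mul, hc, mul_one, Nat.cast_pow, norm_pow, Nat.factorization_def _ hp]

lemma norm_fact_ge (hna : ∀ x y : K, ‖x + y‖ ≤ max ‖x‖ ‖y‖) {p : ℕ} (hp : p.Prime)
    (hpv : ‖(p : K)‖ < 1) {t : ℝ} (ht0 : 0 ≤ t) (ht1 : t ≤ 1) (ht : t ^ (p - 1) = ‖(p : K)‖) (M : ℕ) :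
    t ^ M ≤ ‖((M.factorial : ℕ) : K)‖ := by
  have := Fact.mk hp
  rw [norm_nat_val hna hp hpv (Nat.factorial_ne_zero M), ← ht, ← pow_mul]
  apply pow_le_pow_of_le_one ht0 ht1
  rw [sub_one_mul_padicValNat_factorial]; omega

lemma norm_nat_ge (hna : ∀ x y : K, ‖x + y‖ ≤ max ‖x‖ ‖y‖) {p : ℕ} (hp : p.Prime)
    (hpv : ‖(p : K)‖ < 1) {t : ℝ} (ht0 : 0 ≤ t) (ht1 : t ≤ 1) (ht : t ^ (p - 1) = ‖(p : K)‖) (j : ℕ) :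
    t ^ j ≤ ‖((j + 1 : ℕ) : K)‖ := by
  have := Fact.mk hp
  rw [norm_nat_val hna hp hpv (Nat.succ_ne_zero j), ← ht, ← pow_mul]
  apply pow_le_pow_of_le_one ht0 ht1
  have h1 := sub_one_mul_padicValNat_factorial_lt_of_ne_zero p (Nat.succ_ne_zero j)
  have h2 : padicValNat p (j+1) ≤ padicValNat p (j+1).factorial :=
    (padicValNat_dvd_iff_le (Nat.factorial_ne_zero _)).mp
      (pow_padicValNat_dvd.trans (Nat.dvd_factorial (Nat.succ_pos j) le_rfl))
  have h3 := Nat.mul_le_mul_left (p-1) h2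
  simp only [Nat.succ_eq_add_one] at h1 h3 ⊢
  omega

lemma norm_sum_lt' (hna : ∀ x y : K, ‖x + y‖ ≤ max ‖x‖ ‖y‖) {ι : Type*} (s : Finset ι)
    (f : ι → K) {c : ℝ} (hc : 0 < c) (h : ∀ i ∈ s, ‖f i‖ < c) :
    ‖∑ i ∈ s, f i‖ < c := by
  classical
  induction s using Finset.induction_on with
  | empty => simpa using hc
  | insert a s ha ih =>
    rw [Finset.sum_insert ha]
    refine (hna _ _).trans_lt (max_lt (h a (by simp)) (ih fun i hi => h i (by simp [hi])))

lemma qNat_mul_sub (q : K) (m : ℕ) : qNat q m * (q - 1) = q ^ m - 1 := geom_sum_mul q m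

lemma qNat_ge (hna : ∀ x y : K, ‖x + y‖ ≤ max ‖x‖ ‖y‖) {p : ℕ} (hp : p.Prime)
    (hpv : ‖(p : K)‖ < 1) {t : ℝ} (ht0 : 0 < t) (ht1 : t ≤ 1) (ht : t ^ (p - 1) = ‖(p : K)‖)
    (Q : K) (hQ1 : Q ≠ 1) (hQ : ‖Q - 1‖ < t) (m : ℕ) : ‖(m : K)‖ ≤ ‖qNat Q m‖ := by
  by_contra hlt
  push Not at hlt
  have hm0 : 0 < ‖(m : K)‖ := (norm_nonneg _).trans_lt hlt
  have hm : m ≠ 0 := by rintro rfl; simp at hm0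
  obtain ⟨k, rfl⟩ := Nat.exists_eq_succ_of_ne_zero hm
  rw [Nat.succ_eq_add_one] at *
  have hne : Q - 1 ≠ 0 := sub_ne_zero.mpr hQ1
  have e : qNat Q (k+1) = ∑ j ∈ Finset.range (k+1), (Q-1) ^ j * ((k+1).choose (j+1) : K) := by
    apply mul_right_cancel₀ hne
    rw [qNat_mul_sub]
    have h := add_pow (Q - 1) 1 (k+1)
    rw [sub_add_cancel, Finset.sum_range_succ'] at h
    simp only [one_pow, mul_one, pow_zero, Nat.choose_zero_right, Nat.cast_one] at h
    rw [h, add_sub_cancel_right, Finset.sum_mul]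
    apply Finset.sum_congr rfl
    intro j _
    ring
  rw [Finset.sum_range_succ'] at e
  simp only [pow_zero, zero_add, Nat.choose_one_right, one_mul] at e
  have e2 : ((k + 1 : ℕ) : K) = qNat Q (k+1) -
      ∑ j ∈ Finset.range k, (Q-1) ^ (j+1) * ((k+1).choose (j+1+1) : K) := by
    rw [e]; ring
  have hs : ‖∑ j ∈ Finset.range k, (Q-1) ^ (j+1) * ((k+1).choose (j+1+1) : K)‖ < ‖((k + 1 : ℕ) : K)‖ := by
    apply norm_sum_lt' hna _ _ hm0
    intro j _
    have h1 : ‖((k+1).choose (j+1+1) : K)‖ * ‖((j+1+1 : ℕ) : K)‖ ≤ ‖((k + 1 : ℕ) : K)‖ := by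
      rw [← norm_mul, ← Nat.cast_mul, ← Nat.add_one_mul_choose_eq, Nat.cast_mul, norm_mul]
      exact mul_le_of_le_one_right (norm_nonneg _) (norm_natCast_le_one' hna _)
    have h2 : ‖Q - 1‖ ^ (j+1) < ‖((j+1+1 : ℕ) : K)‖ :=
      (pow_lt_pow_left₀ hQ (norm_nonneg _) (Nat.succ_ne_zero j)).trans_le
        (norm_nat_ge hna hp hpv ht0.le ht1 ht (j+1))
    rw [norm_mul, norm_pow]
    rcases (norm_nonneg ((k+1).choose (j+1+1) : K)).eq_or_lt with h0 | h0
    · rw [← h0, mul_zero]; exact hm0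
    · calc _ < ‖((j+1+1 : ℕ) : K)‖ * ‖((k+1).choose (j+1+1) : K)‖ := mul_lt_mul_of_pos_right h2 h0
        _ = _ := mul_comm _ _
        _ ≤ _ := h1
  have := (norm_sub_le_max hna _ _).trans_lt (max_lt hlt hs)
  rw [← e2] at this
  exact lt_irrefl _ this

lemma norm_not_dvd (hna : ∀ x y : K, ‖x + y‖ ≤ max ‖x‖ ‖y‖) (q : K) (hq : ‖q‖ = 1) (κ : ℕ)
    (hκ : 0 < κ) (hκlt : ‖1 - q ^ κ‖ < 1)
    (hmin : ∀ m : ℕ, 0 < m → m < κ → ‖1 - q ^ m‖ = 1) (N : ℕ) (hN : ¬ κ ∣ N) : ‖1 - q ^ N‖ = 1 := by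
  have hr : 0 < N % κ := Nat.pos_of_ne_zero fun h => hN (Nat.dvd_of_mod_eq_zero h)
  have h1 := hmin (N % κ) hr (Nat.mod_lt _ hκ)
  have h2 : ‖q ^ (N % κ) - q ^ N‖ < 1 := by
    have : q ^ (N % κ) - q ^ N = - (q ^ (N % κ) * ((q ^ κ) ^ (N / κ) - 1)) := by
      conv_lhs => rw [← Nat.mod_add_div N κ, pow_add, pow_mul]
      simp only [Nat.add_mul_mod_self_left, Nat.mod_mod]
      ring
    rw [this, norm_neg, norm_mul, norm_pow, hq, one_pow, one_mul]
    refine (norm_pow_sub_one hna (q ^ κ) (by simp [hq]) _).trans_lt ?_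
    rwa [norm_sub_rev]
  apply le_antisymm
  · exact (norm_sub_le_max hna _ _).trans (by simp [hq])
  · by_contra hlt
    push Not at hlt
    have e : 1 - q ^ (N % κ) = (1 - q ^ N) - (q ^ (N % κ) - q ^ N) := by ring
    have := (norm_sub_le_max hna _ _).trans_lt (max_lt hlt h2)
    rw [← e, h1] at this
    exact lt_irrefl _ this

lemma qFact_ge (hna : ∀ x y : K, ‖x + y‖ ≤ max ‖x‖ ‖y‖) {p : ℕ} (hp : p.Prime)
    (hpv : ‖(p : K)‖ < 1) {t : ℝ} (ht0 : 0 < t) (ht1 : t ≤ 1) (ht : t ^ (p - 1) = ‖(p : K)‖)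
    (q : K) (hq : ‖q‖ = 1) (hqru : ∀ m : ℕ, 0 < m → q ^ m ≠ 1) (κ : ℕ)
    (hκ : 0 < κ) (hκlt : ‖1 - q ^ κ‖ < 1) (hdw : ‖1 - q ^ κ‖ < t)
    (hmin : ∀ m : ℕ, 0 < m → m < κ → ‖1 - q ^ m‖ = 1) (N : ℕ) :
    ‖qNat q κ‖ ^ (N / κ) * ‖(((N / κ).factorial : ℕ) : K)‖ ≤ ‖qFactorial q N‖ := by
  have hq1 : q - 1 ≠ 0 := sub_ne_zero.mpr (by simpa using hqru 1 one_pos)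
  induction N with
  | zero => simp [qFactorial]
  | succ N ih =>
    rw [qFactorial, norm_mul]
    by_cases hd : κ ∣ N + 1
    · rw [Nat.succ_div_of_dvd hd, pow_succ, Nat.factorial_succ, Nat.cast_mul, norm_mul]
      obtain ⟨m, hm⟩ := hd
      have hm' : N / κ + 1 = m := by
        rw [← Nat.succ_div_of_dvd ⟨m, hm⟩, hm, Nat.mul_div_cancel_left _ hκ]
      have e : qNat q (N + 1) = qNat q κ * qNat (q ^ κ) m := by
        apply mul_right_cancel₀ hq1
        rw [qNat_mul_sub, mul_right_comm, qNat_mul_sub, mul_comm, qNat_mul_sub, ← pow_mul, hm]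
      rw [e, norm_mul, hm']
      have h1 := qNat_ge hna hp hpv ht0 ht1 ht (q ^ κ) (hqru κ hκ) (by rwa [norm_sub_rev]) m
      calc _ = (‖qNat q κ‖ ^ (N / κ) * ‖(((N / κ).factorial : ℕ) : K)‖) * (‖qNat q κ‖ * ‖(m : K)‖) := by ring
        _ ≤ _ := mul_le_mul ih (mul_le_mul_of_nonneg_left h1 (norm_nonneg _)) (by positivity)
            (norm_nonneg _)
    · rw [Nat.succ_div_of_not_dvd hd]
      have hκ1 : 1 < κ := by
        rcases Nat.lt_or_ge 1 κ with h | h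
        · exact h
        · exfalso; apply hd; have : κ = 1 := by omega
          rw [this]; exact one_dvd _
      have h1 := hmin 1 one_pos hκ1
      rw [pow_one, norm_sub_rev] at h1
      have h2 := congrArg norm (qNat_mul_sub q (N+1))
      rw [norm_mul, h1, mul_one, norm_sub_rev, norm_not_dvd hna q hq κ hκ hκlt hmin _ hd] at h2
      rw [h2, mul_one]
      exact ih

lemma final_limit (s t A : ℝ) (hs0 : 0 < s) (hs1 : s ≤ 1) (ht0 : 0 < t) (ht1 : t ≤ 1) (n κ : ℕ)
    (hn : 1 ≤ n) (hκ : 0 < κ)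
    (hA : A = s ^ (((n : ℝ) - 1) / ((n : ℝ) * (κ : ℝ))) * t ^ ((1 : ℝ) / κ)) (u : ℕ → ℝ)
    (hu : ∀ N, u N ≤ s ^ (N / (n * κ)) / (s ^ (N / κ) * t ^ (N / κ))) :
    ENNReal.ofReal A ≤ min 1 (Filter.liminf (fun N : ℕ =>
      (ENNReal.ofReal (u N)) ^ (-(1 / (N : ℝ)))) Filter.atTop) := by
  have hn' : (1 : ℝ) ≤ n := by exact_mod_cast hn
  have hκ' : (0 : ℝ) < κ := by exact_mod_cast hκ
  have hA0 : 0 < A := by rw [hA]; positivity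
  have hA1 : A ≤ 1 := by
    rw [hA]
    have h1 : s ^ (((n : ℝ) - 1) / ((n : ℝ) * (κ : ℝ))) ≤ 1 :=
      Real.rpow_le_one hs0.le hs1 (div_nonneg (by linarith) (by positivity))
    have h2 : t ^ ((1 : ℝ) / κ) ≤ 1 := Real.rpow_le_one ht0.le ht1 (by positivity)
    exact mul_le_one₀ h1 (by positivity) h2
  have hu2 : ∀ N, u N ≤ s⁻¹ * (A ^ N)⁻¹ := by
    intro N
    refine (hu N).trans ?_
    have h1 : s ^ (N / (n * κ)) ≤ s ^ ((N : ℝ) / (n * κ) - 1) := by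
      rw [← Real.rpow_natCast]
      apply Real.rpow_le_rpow_of_exponent_ge hs0 hs1
      have := Nat.lt_div_mul_add (a := N) (b := n * κ) (by positivity)
      have h3 : (N : ℝ) < (N / (n * κ) : ℕ) * (n * κ) + n * κ := by exact_mod_cast this
      rw [sub_le_iff_le_add, div_le_iff₀ (by positivity)]
      linarith
    have hle : ((N / κ : ℕ) : ℝ) ≤ (N : ℝ) / κ := Nat.cast_div_le
    have h2 : s ^ ((N : ℝ) / κ) ≤ s ^ (N / κ) := by
      rw [← Real.rpow_natCast]
      exact Real.rpow_le_rpow_of_exponent_ge hs0 hs1 hle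
    have h3 : t ^ ((N : ℝ) / κ) ≤ t ^ (N / κ) := by
      rw [← Real.rpow_natCast]
      exact Real.rpow_le_rpow_of_exponent_ge ht0 ht1 hle
    calc _ ≤ s ^ ((N : ℝ) / (n * κ) - 1) / (s ^ ((N : ℝ) / κ) * t ^ ((N : ℝ) / κ)) := by gcongr
      _ = _ := by
        rw [hA, mul_pow, ← Real.rpow_natCast, ← Real.rpow_natCast, ← Real.rpow_mul hs0.le,
          ← Real.rpow_mul ht0.le, div_eq_mul_inv, mul_inv, mul_inv, ← mul_assoc, ← mul_assoc]
        rw [← Real.rpow_neg hs0.le, ← Real.rpow_neg hs0.le, ← Real.rpow_neg_one s,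
          ← Real.rpow_add hs0, ← Real.rpow_add hs0]
        have x1 : (N : ℝ) / (n * κ) - 1 + -((N : ℝ) / κ) =
            -1 + -(((n : ℝ) - 1) / (n * κ) * N) := by field_simp; ring
        have x2 : (N : ℝ) / κ = 1 / κ * N := by ring
        rw [x1, x2]
  apply le_min (ENNReal.ofReal_le_one.mpr hA1)
  have hlim : Filter.Tendsto (fun N : ℕ => ENNReal.ofReal (s ^ (1 / (N : ℝ)) * A)) Filter.atTop
      (nhds (ENNReal.ofReal A)) := by
    apply ENNReal.tendsto_ofReal
    have h0 : Filter.Tendsto (fun N : ℕ => (1 / (N : ℝ))) Filter.atTop (nhds 0) :=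
      tendsto_one_div_atTop_nhds_zero_nat
    have h1 : Filter.Tendsto (fun N : ℕ => s ^ (1 / (N : ℝ))) Filter.atTop (nhds (s ^ (0 : ℝ))) :=
      (Real.continuousAt_const_rpow hs0.ne').tendsto.comp h0
    simpa using h1.mul_const A
  rw [← hlim.liminf_eq]
  refine Filter.liminf_le_liminf ?_
  filter_upwards [Filter.eventually_ge_atTop 1] with N hN
  have hN' : (0 : ℝ) < N := by exact_mod_cast hN
  have hpos : 0 < s⁻¹ * (A ^ N)⁻¹ := by positivity
  have e : s ^ (1 / (N : ℝ)) * A = (s⁻¹ * (A ^ N)⁻¹) ^ (-(1 / (N : ℝ))) := by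
    rw [← mul_inv, Real.inv_rpow (by positivity), Real.rpow_neg (by positivity), inv_inv,
      Real.mul_rpow hs0.le (by positivity), ← Real.rpow_natCast, ← Real.rpow_mul hA0.le]
    congr 1
    rw [mul_one_div_cancel hN'.ne', Real.rpow_one]
  rw [e, ← ENNReal.ofReal_rpow_of_pos hpos, ENNReal.rpow_neg, ENNReal.rpow_neg]
  apply ENNReal.inv_le_inv.mpr
  exact ENNReal.rpow_le_rpow (ENNReal.ofReal_le_ofReal (hu2 N)) (by positivity)

lemma Gseq_bound (hna : ∀ x y : K, ‖x + y‖ ≤ max ‖x‖ ‖y‖) (q : K) (hq : ‖q‖ = 1)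
    (hqru : ∀ m : ℕ, 0 < m → q ^ m ≠ 1) (κ : ℕ) (hκ : 0 < κ)
    (hmin : ∀ m : ℕ, 0 < m → m < κ → ‖1 - q ^ m‖ = 1)
    {G : Matrix (Fin μ) (Fin μ) (RatFunc K)} (hG : Bd 1 G) (n : ℕ)
    (hred : Bd ‖qNat q κ‖ (Gseq q G (n * κ))) (N : ℕ) :
    Bd (‖qNat q κ‖ ^ (N / (n * κ))) (Gseq q G N) := by
  have hne : q ≠ 1 := by simpa using hqru 1 one_pos
  have hmain : ∀ m, Bd (‖qNat q κ‖ ^ m) (Gseq q G (m * (n * κ))) := by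
    intro m
    rcases Nat.lt_or_ge 1 κ with h | h
    · have h1 := hmin 1 one_pos h
      rw [pow_one, norm_sub_rev] at h1
      have h2 : ‖qNat q κ‖ = ‖1 - q ^ κ‖ := by
        have h2 := congrArg norm (qNat_mul_sub q κ)
        rwa [norm_mul, h1, mul_one, norm_sub_rev] at h2
      rw [h2] at hred ⊢
      exact Bd_main hna q hq h1 κ hκ hmin hG n hred m
    · have : κ = 1 := by omega
      have h2 : ‖qNat q κ‖ = 1 := by rw [this]; simp [qNat]
      rw [h2, one_pow, Gseq_eq]
      exact Bd_Del_iter hna q hq hne zero_le_one hG Bd_one _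
  have := Bd_Del_iter hna q hq hne (by positivity) hG (hmain (N / (n * κ))) (N % (n * κ))
  rw [Gseq_eq, ← Function.iterate_add_apply, mul_comm (N / (n * κ)), Nat.mod_add_div, ← Gseq_eq] at this
  exact this

end aux

/-- Lower bound for χ_v under unipotent reduction modulo 1 - q^κ of order n. -/
theorem q_chi_unipotent_mod_one_sub_q_pow_kappa
    {Kv : Type*} [NontriviallyNormedField Kv] [CompleteSpace Kv]
    (hna : ∀ x y : Kv, ‖x + y‖ ≤ max ‖x‖ ‖y‖)
    (p : ℕ) (hp : Nat.Prime p) (hpv : ‖(p : Kv)‖ < 1)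
    (q : Kv) (hq1 : ‖q‖ = 1) (hqru : ∀ m : ℕ, 0 < m → q ^ m ≠ 1)
    (κ : ℕ) (hκpos : 0 < κ) (hκlt : ‖1 - q ^ κ‖ < 1)
    (hκmin : ∀ m : ℕ, 0 < m → ‖1 - q ^ m‖ < 1 → κ ≤ m)
    (hdw : ‖1 - q ^ κ‖ < ‖(p : Kv)‖ ^ ((1 : ℝ) / ((p : ℝ) - 1)))
    (μ : ℕ) (G : Matrix (Fin μ) (Fin μ) (RatFunc Kv)) (hG1 : matGaussNorm G ≤ 1)
    (n : ℕ) (hn : 1 ≤ n) (hred : matGaussNorm (Gseq q G (n * κ)) ≤ ‖qNat q κ‖) :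
    ENNReal.ofReal (‖qNat q κ‖ ^ (((n : ℝ) - 1) / ((n : ℝ) * (κ : ℝ))) *
        ‖(p : Kv)‖ ^ ((1 : ℝ) / ((κ : ℝ) * ((p : ℝ) - 1)))) ≤
      chiV q G := by
  have hmin : ∀ m : ℕ, 0 < m → m < κ → ‖1 - q ^ m‖ = 1 := by
    intro m hm hlt
    apply le_antisymm
    · exact (norm_sub_le_max hna _ _).trans (by simp [hq1])
    · by_contra h
      push Not at h
      exact absurd (hκmin m hm h) (by omega)
  have hp2 : (2 : ℝ) ≤ p := by exact_mod_cast hp.two_le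
  have hp1 : (0 : ℝ) < (p : ℝ) - 1 := by linarith
  set t : ℝ := ‖(p : Kv)‖ ^ ((1 : ℝ) / ((p : ℝ) - 1)) with htdef
  have ht0 : 0 < t := (norm_nonneg _).trans_lt hdw
  have ht1 : t ≤ 1 := Real.rpow_le_one (norm_nonneg _) hpv.le (by positivity)
  have ht : t ^ (p - 1) = ‖(p : Kv)‖ := by
    rw [htdef, ← Real.rpow_natCast, ← Real.rpow_mul (norm_nonneg _),
      Nat.cast_sub hp.one_le, Nat.cast_one, one_div_mul_cancel hp1.ne', Real.rpow_one]
  set s : ℝ := ‖qNat q κ‖ with hs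
  have hs0 : 0 < s := by
    rw [hs, norm_pos_iff]
    intro h0
    have := qNat_mul_sub q κ
    rw [h0, zero_mul] at this
    exact hqru κ hκpos (sub_eq_zero.mp this.symm)
  have hs1 : s ≤ 1 := by
    rw [hs, qNat]
    exact norm_sum_le' hna _ _ zero_le_one (fun i _ => by simp [hq1])
  have hG : Bd 1 G := (Bd_iff zero_le_one).mp hG1
  have hred' : Bd s (Gseq q G (n * κ)) := (Bd_iff hs0.le).mp hred
  have hκ' : (0 : ℝ) < κ := by exact_mod_cast hκpos
  unfold chiV
  refine final_limit s t _ hs0 hs1 ht0 ht1 n κ hn hκpos ?_ _ ?_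
  · rw [htdef, ← Real.rpow_mul (norm_nonneg _)]
    congr 2
    field_simp
  · intro N
    have h1 : matGaussNorm (Gseq q G N) ≤ s ^ (N / (n * κ)) :=
      (Bd_iff (by positivity)).mpr (Gseq_bound hna q hq1 hqru κ hκpos hmin hG n hred' N)
    have h2 := qFact_ge hna hp hpv ht0 ht1 ht q hq1 hqru κ hκpos hκlt hdw hmin N
    have h3 := norm_fact_ge hna hp hpv ht0.le ht1 ht (N / κ)
    have h4 : s ^ (N / κ) * t ^ (N / κ) ≤ ‖qFactorial q N‖ :=
      (mul_le_mul_of_nonneg_left h3 (by positivity)).trans h2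
    exact div_le_div₀ (by positivity) h1 (by positivity) h4
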